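/- The Touchard–Riordan formula: \sum_{I \in Inv(2n)} q^{cr(I)/2} = \frac{1}{(1-q)^n} \sum_{k=0}^n \left( \binom{2n}{n-k} - \binom{2n}{n-k-1} \right) (-1)^k q^{k(k+1)/2}, where Inv(2n) is the set of fixed-point-free involutions of {1,...,2n} and cr(I)/2 is the number of pairs (i,j) with i < j < I(i) < I(j). -/

import Mathlib

open Finset Polynomial
open scoped Classical

noncomputable section
/-- Binomial coefficient `a choose b` with integer lower index, equal to `0`
when `b < 0`. -/
def chooseInt (a : ℕ) (b : ℤ) : ℤ := if 0 ≤ b then a.choose b.toNat else 0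

/-- Number of crossings of a perfect matching (fixed-point-free involution):
pairs `(i,j)` with `i < j < I(i) < I(j)`. -/
def crMatch {m : ℕ} (σ : Equiv.Perm (Fin m)) : ℕ :=
  ((Finset.univ ×ˢ Finset.univ : Finset (Fin m × Fin m)).filter fun p =>
    p.1 < p.2 ∧ p.2 < σ p.1 ∧ σ p.1 < σ p.2).card

/-- Weighted count of the lattice paths with steps `±1` which start at height `0`, stay nonnegative
and end at height `k` after `m` steps, a down step from height `k + 1` having weight `w k`. -/
def pathSum {R : Type*} [CommRing R] (w : ℕ → R) : ℕ → ℕ → R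
  | 0, 0 => 1
  | 0, _ + 1 => 0
  | m + 1, 0 => w 0 * pathSum w m 1
  | m + 1, k + 1 => pathSum w m k + w (k + 1) * pathSum w m (k + 2)

section PathSum

variable {R : Type*} [CommRing R]

theorem pathSum_eq_zero_of_lt (w : ℕ → R) {m k : ℕ} (h : m < k) : pathSum w m k = 0 := by
  induction m generalizing k with
  | zero => obtain _ | k := k <;> simp_all [pathSum]
  | succ m ih =>
    obtain _ | k := k
    · omega
    · simp [pathSum, ih (show m < k by omega), ih (show m < k + 2 by omega)]

theorem pathSum_mul_left (c : R) (w : ℕ → R) {m k l : ℕ} (h : m = k + 2 * l) :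
    pathSum (fun i => c * w i) m k = c ^ l * pathSum w m k := by
  induction m generalizing k l with
  | zero =>
    obtain rfl : k = 0 := by omega
    obtain rfl : l = 0 := by omega
    simp [pathSum]
  | succ m ih =>
    obtain _ | k := k
    · obtain _ | l := l
      · omega
      · simp only [pathSum]
        rw [ih (k := 1) (l := l) (by omega)]
        ring
    · obtain _ | l := l
      · simp only [pathSum]
        rw [ih (k := k) (l := 0) (by omega), pathSum_eq_zero_of_lt _ (show m < k + 2 by omega),
          pathSum_eq_zero_of_lt _ (show m < k + 2 by omega)]
        ring
      · simp only [pathSum]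
        rw [ih (k := k) (l := l + 1) (by omega), ih (k := k + 2) (l := l) (by omega)]
        ring

/-- The `q`-binomial coefficient `[k + j choose j]`. -/
def qBinom (q : R) : ℕ → ℕ → R
  | 0, _ => 1
  | _ + 1, 0 => 1
  | k + 1, j + 1 => qBinom q k (j + 1) + q ^ (k + 1) * qBinom q (k + 1) j

theorem qBinom_zero_right (q : R) (k : ℕ) : qBinom q k 0 = 1 := by
  cases k <;> simp [qBinom]

theorem qBinom_mul (q : R) (k j : ℕ) :
    (1 - q ^ (j + 1)) * qBinom q k (j + 1) = (1 - q ^ (k + j + 1)) * qBinom q k j ∧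
    (1 - q ^ (k + 1)) * qBinom q (k + 1) j = (1 - q ^ (k + j + 1)) * qBinom q k j := by
  induction k generalizing j with
  | zero =>
    refine ⟨by simp [qBinom], ?_⟩
    induction j with
    | zero => simp [qBinom]
    | succ j ih =>
      simp only [qBinom] at ih ⊢
      linear_combination q * ih
  | succ k ih =>
    have h (j : ℕ) : (1 - q ^ (j + 1)) * qBinom q (k + 1) (j + 1) =
        (1 - q ^ (k + 1 + j + 1)) * qBinom q (k + 1) j := by
      rw [qBinom]
      linear_combination (ih j).1 - (ih j).2
    refine ⟨h j, ?_⟩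
    induction j with
    | zero => simp [qBinom_zero_right]
    | succ j ihj =>
      rw [qBinom]
      linear_combination q ^ (k + 2) * ihj - q ^ (k + 2) * h j

/-- The coefficients expressing `pathSum` with weights `1 - q ^ (k + 1)` through unweighted path
counts. -/
def pathCoeff (q : R) (k j : ℕ) : R := (-1) ^ j * q ^ (j * (j + 1) / 2) * qBinom q k j

theorem triangle_succ (j : ℕ) : (j + 1) * (j + 1 + 1) / 2 = j * (j + 1) / 2 + (j + 1) := by
  rw [show (j + 1) * (j + 1 + 1) = j * (j + 1) + (j + 1) * 2 by ring,
    Nat.add_mul_div_right _ _ two_pos]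

theorem pathCoeff_zero_succ (q : R) (j : ℕ) :
    pathCoeff q 0 j + pathCoeff q 0 (j + 1) = (1 - q) * pathCoeff q 1 j := by
  have h := (qBinom_mul q 0 j).2
  simp only [pathCoeff, triangle_succ, pow_add]
  simp only [qBinom, zero_add, pow_one] at h ⊢
  linear_combination (-(-1) ^ j * q ^ (j * (j + 1) / 2)) * h

theorem pathCoeff_succ_succ (q : R) (k j : ℕ) :
    pathCoeff q (k + 1) (j + 1) + pathCoeff q (k + 1) j =
      pathCoeff q k (j + 1) + (1 - q ^ (k + 2)) * pathCoeff q (k + 2) j := by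
  have h := (qBinom_mul q (k + 1) j).2
  simp only [pathCoeff, triangle_succ, pow_add]
  rw [qBinom]
  linear_combination (-(-1) ^ j * q ^ (j * (j + 1) / 2)) * h

theorem pathSum_one_sub_pow (q : R) {m N : ℕ} (k : ℕ) (h : m < N) :
    pathSum (fun i => 1 - q ^ (i + 1)) m k =
      ∑ j ∈ range N, pathSum (fun _ => (1 : R)) m (k + 2 * j) * pathCoeff q k j := by
  induction m generalizing k N with
  | zero =>
    obtain ⟨N, rfl⟩ : ∃ N', N = N' + 1 := ⟨N - 1, by omega⟩
    rw [sum_range_succ', sum_eq_zero]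
    · obtain _ | k := k <;> simp [pathSum, pathCoeff, qBinom]
    · intro j _
      rw [pathSum_eq_zero_of_lt _ (by omega), zero_mul]
  | succ m ih =>
    obtain ⟨N, rfl⟩ : ∃ N', N = N' + 1 := ⟨N - 1, by omega⟩
    set A := pathSum (fun _ => (1 : R)) with hA
    have hstep (k : ℕ) : A (m + 1) (k + 1) = A m k + A m (k + 2) := by
      simp [hA, pathSum]
    obtain _ | k := k
    · rw [pathSum, ih 1 (show m < N by omega), sum_range_succ', mul_sum]
      have h1 : ∑ j ∈ range N, A (m + 1) (0 + 2 * (j + 1)) * pathCoeff q 0 (j + 1) =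
          ∑ j ∈ range N, A m (1 + 2 * j) * pathCoeff q 0 (j + 1) +
          ∑ j ∈ range N, A m (1 + 2 * (j + 1)) * pathCoeff q 0 (j + 1) := by
        rw [← sum_add_distrib]
        refine sum_congr rfl fun j _ => ?_
        rw [show 0 + 2 * (j + 1) = (1 + 2 * j) + 1 by ring, hstep]
        ring_nf
      have h0 : A (m + 1) (0 + 2 * 0) = A m (1 + 2 * 0) := by simp [hA, pathSum]
      have h2 := sum_range_succ' (fun j => A m (1 + 2 * j) * pathCoeff q 0 j) N
      rw [sum_range_succ, hA, pathSum_eq_zero_of_lt _ (show m < 1 + 2 * N by omega), ← hA] at h2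
      rw [h1, h0, add_assoc, ← h2, zero_mul, add_zero, ← sum_add_distrib]
      refine sum_congr rfl fun j _ => ?_
      linear_combination (-A m (1 + 2 * j)) * pathCoeff_zero_succ q j
    · rw [pathSum, ih k (show m < N + 1 by omega), ih (k + 2) (show m < N by omega)]
      have h1 : ∑ j ∈ range (N + 1), A (m + 1) (k + 1 + 2 * j) * pathCoeff q (k + 1) j =
          ∑ j ∈ range (N + 1), A m (k + 2 * j) * pathCoeff q (k + 1) j +
          ∑ j ∈ range (N + 1), A m (k + 2 + 2 * j) * pathCoeff q (k + 1) j := by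
        rw [← sum_add_distrib]
        refine sum_congr rfl fun j _ => ?_
        rw [show k + 1 + 2 * j = (k + 2 * j) + 1 by ring, hstep]
        ring_nf
      rw [h1, sum_range_succ', sum_range_succ' (fun j => A m (k + 2 * j) * pathCoeff q (k + 1) j),
        sum_range_succ _ N, hA, pathSum_eq_zero_of_lt _ (show m < k + 2 + 2 * N by omega), ← hA,
        mul_sum]
      have h2 : ∑ j ∈ range N, A m (k + 2 * (j + 1)) * pathCoeff q k (j + 1) +
          ∑ j ∈ range N, (1 - q ^ (k + 1 + 1)) * (A m (k + 2 + 2 * j) * pathCoeff q (k + 2) j) =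
          ∑ j ∈ range N, A m (k + 2 * (j + 1)) * pathCoeff q (k + 1) (j + 1) +
          ∑ j ∈ range N, A m (k + 2 + 2 * j) * pathCoeff q (k + 1) j := by
        simp only [← sum_add_distrib]
        refine sum_congr rfl fun j _ => ?_
        rw [show k + 2 * (j + 1) = k + 2 + 2 * j by ring]
        linear_combination (-A m (k + 2 + 2 * j)) * pathCoeff_succ_succ q k j
      have h3 (k : ℕ) : pathCoeff q k 0 = 1 := by simp [pathCoeff, qBinom_zero_right]
      rw [h3, h3]
      linear_combination h2

end PathSum

theorem chooseInt_natCast (a b : ℕ) : chooseInt a b = a.choose b := by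
  simp [chooseInt]

theorem chooseInt_of_neg (a : ℕ) {b : ℤ} (h : b < 0) : chooseInt a b = 0 := by
  simp [chooseInt, h]

theorem chooseInt_succ (a : ℕ) (b : ℤ) :
    chooseInt (a + 1) b = chooseInt a b + chooseInt a (b - 1) := by
  obtain h | h := lt_or_ge b 0
  · simp [chooseInt_of_neg _ h, chooseInt_of_neg a (show b - 1 < 0 by omega)]
  · lift b to ℕ using h
    obtain _ | b := b
    · rw [chooseInt_natCast, chooseInt_natCast, chooseInt_of_neg _ (by simp)]
      simp
    · rw [show ((b + 1 : ℕ) : ℤ) - 1 = (b : ℕ) by simp]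
      simp only [chooseInt_natCast, Nat.choose_succ_succ']
      push_cast
      ring

theorem chooseInt_symm_half {a : ℕ} {b : ℤ} (h : (a : ℤ) + 1 = 2 * b) :
    chooseInt a b = chooseInt a (b - 1) := by
  obtain ⟨c, rfl⟩ : ∃ c : ℕ, b = c + 1 := ⟨(b - 1).toNat, by omega⟩
  obtain rfl : a = 2 * c + 1 := by omega
  rw [add_sub_cancel_right, show (c : ℤ) + 1 = (c + 1 : ℕ) by simp, chooseInt_natCast,
    chooseInt_natCast, Nat.choose_symm_half]

theorem pathSum_one_eq_chooseInt {R : Type*} [CommRing R] {m s : ℕ} {b : ℤ}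
    (h : (m : ℤ) - s = 2 * b) :
    pathSum (fun _ => (1 : R)) m s = ((chooseInt m b - chooseInt m (b - 1) : ℤ) : R) := by
  induction m generalizing s b with
  | zero =>
    obtain _ | s := s
    · obtain rfl : b = 0 := by omega
      simp [pathSum, chooseInt]
    · simp [pathSum, chooseInt_of_neg _ (show b < 0 by omega),
        chooseInt_of_neg _ (show b - 1 < 0 by omega)]
  | succ m ih =>
    obtain _ | s := s
    · rw [pathSum, ih (b := b - 1) (by push_cast at h ⊢; omega), chooseInt_succ, chooseInt_succ,
        chooseInt_symm_half (b := b) (by push_cast at h; omega)]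
      push_cast
      ring
    · rw [pathSum, ih (b := b) (by push_cast at h ⊢; omega),
        ih (b := b - 1) (by push_cast at h ⊢; omega), chooseInt_succ, chooseInt_succ]
      push_cast
      ring

section Involutions

variable {m : ℕ}

/-- The fixed points of a permutation. -/
def fixedPts (σ : Equiv.Perm (Fin m)) : Finset (Fin m) := univ.filter fun i => σ i = i

/-- Crossings of an involution viewed as a partial matching, a fixed point lying below an arc
counting as a crossing. -/
def partialCrossings (σ : Equiv.Perm (Fin m)) : ℕ :=
  ∑ i, ∑ j, if i < j ∧ j < σ i ∧ (σ i < σ j ∨ σ j = j) then 1 else 0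

/-- Generating polynomial by crossings of the involutions of `Fin m` with `k` fixed points. -/
def crossingPoly (m k : ℕ) : ℤ[X] :=
  ∑ σ : Equiv.Perm (Fin m),
    if (∀ i, σ (σ i) = i) ∧ #(fixedPts σ) = k then X ^ partialCrossings σ else 0

theorem sum_pow_card_filter_lt {α R : Type*} [LinearOrder α] [CommSemiring R] (q : R)
    (s : Finset α) : ∑ x ∈ s, q ^ #{y ∈ s | y < x} = ∑ i ∈ range #s, q ^ i := by
  induction s using Finset.induction_on_max with
  | empty => simp
  | insert a s ha ih =>
    have hmem : a ∉ s := fun h => lt_irrefl a (ha a h)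
    rw [sum_insert hmem, card_insert_of_notMem hmem, sum_range_succ, ← ih, add_comm]
    congr 1
    · refine sum_congr rfl fun x hx => ?_
      rw [filter_insert, if_neg (ha x hx).not_gt]
    · rw [filter_insert, if_neg (lt_irrefl a), filter_true_of_mem ha]

section Zero

variable (e : Equiv.Perm (Fin m))

theorem decomposeFin_symm_zero_involutive_iff :
    (∀ i, Equiv.Perm.decomposeFin.symm (0, e) (Equiv.Perm.decomposeFin.symm (0, e) i) = i) ↔
      ∀ i, e (e i) = i := by
  simp [Fin.forall_fin_succ]

theorem card_fixedPts_decomposeFin_symm_zero :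
    #(fixedPts (Equiv.Perm.decomposeFin.symm (0, e))) = #(fixedPts e) + 1 := by
  simp only [fixedPts, card_filter, Fin.sum_univ_succ]
  simp [add_comm]

theorem partialCrossings_decomposeFin_symm_zero :
    partialCrossings (Equiv.Perm.decomposeFin.symm (0, e)) = partialCrossings e := by
  simp only [partialCrossings, Fin.sum_univ_succ (n := m)]
  simp

end Zero

section Succ

variable {e : Equiv.Perm (Fin m)} {x : Fin m}

theorem decomposeFin_symm_succ_apply_self (hx : e x = x) :
    Equiv.Perm.decomposeFin.symm (x.succ, e) x.succ = 0 := by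
  simp [hx]

theorem decomposeFin_symm_succ_apply_of_ne (hx : e x = x) {i : Fin m} (hi : i ≠ x) :
    Equiv.Perm.decomposeFin.symm (x.succ, e) i.succ = (e i).succ := by
  have : e i ≠ x := fun h => hi (e.injective (h.trans hx.symm))
  rw [Equiv.Perm.decomposeFin_symm_apply_succ,
    Equiv.swap_apply_of_ne_of_ne (Fin.succ_ne_zero _) (by simpa using this)]

theorem decomposeFin_symm_succ_involutive_iff :
    (∀ i, Equiv.Perm.decomposeFin.symm (x.succ, e)
      (Equiv.Perm.decomposeFin.symm (x.succ, e) i) = i) ↔ (∀ i, e (e i) = i) ∧ e x = x := by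
  have key (hx : e x = x) (i : Fin m) (hi : i ≠ x) : Equiv.Perm.decomposeFin.symm (x.succ, e)
      (Equiv.Perm.decomposeFin.symm (x.succ, e) i.succ) = (e (e i)).succ := by
    have : e i ≠ x := fun h => hi (e.injective (h.trans hx.symm))
    rw [decomposeFin_symm_succ_apply_of_ne hx hi, decomposeFin_symm_succ_apply_of_ne hx this]
  constructor
  · intro h
    have hx : e x = x := by
      have h0 := h 0
      rw [Equiv.Perm.decomposeFin_symm_apply_zero, Equiv.Perm.decomposeFin_symm_apply_succ,
        Equiv.swap_apply_eq_iff, Equiv.swap_apply_left] at h0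
      exact Fin.succ_injective _ h0
    refine ⟨fun i => ?_, hx⟩
    obtain rfl | hi := eq_or_ne i x
    · rw [hx, hx]
    · exact Fin.succ_injective _ ((key hx i hi).symm.trans (h i.succ))
  · rintro ⟨h, hx⟩
    refine Fin.cases ?_ fun i => ?_
    · rw [Equiv.Perm.decomposeFin_symm_apply_zero, decomposeFin_symm_succ_apply_self hx]
    · obtain rfl | hi := eq_or_ne i x
      · rw [decomposeFin_symm_succ_apply_self hx, Equiv.Perm.decomposeFin_symm_apply_zero]
      · rw [key hx i hi, h]

theorem card_fixedPts_decomposeFin_symm_succ (hx : e x = x) :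
    #(fixedPts (Equiv.Perm.decomposeFin.symm (x.succ, e))) + 1 = #(fixedPts e) := by
  have h (i : Fin m) : (if e i = i then 1 else 0) =
      (if Equiv.Perm.decomposeFin.symm (x.succ, e) i.succ = i.succ then 1 else 0) +
        if i = x then 1 else 0 := by
    obtain rfl | hi := eq_or_ne i x
    · rw [decomposeFin_symm_succ_apply_self hx]
      simp [hx, (Fin.succ_ne_zero _).symm]
    · rw [decomposeFin_symm_succ_apply_of_ne hx hi]
      simp [hi]
  simp only [fixedPts, card_filter, Fin.sum_univ_succ]
  rw [sum_congr rfl fun i _ => h i, sum_add_distrib]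
  simp

theorem partialCrossings_decomposeFin_symm_succ (hx : e x = x) :
    partialCrossings (Equiv.Perm.decomposeFin.symm (x.succ, e)) =
      partialCrossings e + #{y ∈ fixedPts e | y < x} := by
  set σ := Equiv.Perm.decomposeFin.symm (x.succ, e) with hσ
  have h0 : σ 0 = x.succ := by simp [hσ]
  have hself : σ x.succ = 0 := decomposeFin_symm_succ_apply_self hx
  have hne {i : Fin m} (hi : i ≠ x) : σ i.succ = (e i).succ :=
    decomposeFin_symm_succ_apply_of_ne hx hi
  have hold (i j : Fin m) : (if i < j ∧ j < e i ∧ (e i < e j ∨ e j = j) then 1 else 0) =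
      (if i.succ < j.succ ∧ j.succ < σ i.succ ∧ (σ i.succ < σ j.succ ∨ σ j.succ = j.succ)
        then 1 else 0) + if j = x then (if i < x ∧ x < e i then 1 else 0) else 0 := by
    obtain rfl | hi := eq_or_ne i x
    · rw [hself, hx, if_neg (by grind), if_neg (by simp)]
      simp
    · obtain rfl | hj := eq_or_ne j x
      · rw [hself, hne hi, hx]
        simp [(Fin.succ_ne_zero _).symm]
      · rw [hne hi, hne hj]
        simp [hj]
  have hnew (j : Fin m) :
      (if 0 < j.succ ∧ j.succ < σ 0 ∧ (σ 0 < σ j.succ ∨ σ j.succ = j.succ) then 1 else 0) =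
      (if j < x ∧ x < e j then 1 else 0) + if e j = j ∧ j < x then 1 else 0 := by
    obtain rfl | hj := eq_or_ne j x
    · simp [h0]
    · rw [hne hj, h0]
      simp only [Fin.succ_pos, Fin.succ_lt_succ_iff, Fin.succ_inj, true_and]
      grind
  have hcard : #{y ∈ fixedPts e | y < x} = ∑ j, if e j = j ∧ j < x then 1 else 0 := by
    rw [fixedPts, filter_filter, card_filter]
  rw [hcard, partialCrossings, partialCrossings]
  simp only [hold, sum_add_distrib, Fin.sum_univ_succ (n := m), hnew]
  simp
  ring

end Succ

theorem crossingPoly_succ (m k : ℕ) :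
    crossingPoly (m + 1) k = (∑ e : Equiv.Perm (Fin m),
      if (∀ i, e (e i) = i) ∧ #(fixedPts e) + 1 = k then X ^ partialCrossings e else 0) +
      (∑ i ∈ range (k + 1), X ^ i) * crossingPoly m (k + 1) := by
  rw [crossingPoly, ← Equiv.Perm.decomposeFin.symm.sum_comp, Fintype.sum_prod_type,
    Fin.sum_univ_succ]
  congr 1
  · simp only [decomposeFin_symm_zero_involutive_iff, card_fixedPts_decomposeFin_symm_zero,
      partialCrossings_decomposeFin_symm_zero]
  · rw [sum_comm, crossingPoly, mul_sum]
    refine sum_congr rfl fun e _ => ?_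
    have h (x : Fin m) : (if (∀ i, Equiv.Perm.decomposeFin.symm (x.succ, e)
        (Equiv.Perm.decomposeFin.symm (x.succ, e) i) = i) ∧
          #(fixedPts (Equiv.Perm.decomposeFin.symm (x.succ, e))) = k
        then X ^ partialCrossings (Equiv.Perm.decomposeFin.symm (x.succ, e)) else 0 : ℤ[X]) =
        if e x = x then (if (∀ i, e (e i) = i) ∧ #(fixedPts e) = k + 1
          then X ^ partialCrossings e * X ^ #{y ∈ fixedPts e | y < x} else 0) else 0 := by
      simp only [decomposeFin_symm_succ_involutive_iff]
      by_cases hx : e x = x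
      · rw [← card_fixedPts_decomposeFin_symm_succ hx,
          partialCrossings_decomposeFin_symm_succ hx, pow_add]
        simp [hx]
      · simp [hx]
    rw [sum_congr rfl fun x _ => h x, ← sum_filter]
    by_cases he : (∀ i, e (e i) = i) ∧ #(fixedPts e) = k + 1
    · simp only [if_pos he]
      rw [← mul_sum, ← he.2, ← sum_pow_card_filter_lt, mul_comm]
      rfl
    · simp only [if_neg he, sum_const_zero, mul_zero]

theorem crossingPoly_eq_pathSum (m k : ℕ) :
    crossingPoly m k = pathSum (fun i => ∑ j ∈ range (i + 1), (X : ℤ[X]) ^ j) m k := by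
  induction m generalizing k with
  | zero =>
    obtain _ | k := k <;> simp [crossingPoly, pathSum, fixedPts, partialCrossings]
  | succ m ih =>
    rw [crossingPoly_succ, ih]
    obtain _ | k := k
    · simp [pathSum]
    · rw [pathSum, ← ih k, crossingPoly]
      simp only [add_left_inj]

theorem partialCrossings_eq_crMatch {σ : Equiv.Perm (Fin m)} (h : ∀ i, σ i ≠ i) :
    partialCrossings σ = crMatch σ := by
  rw [partialCrossings, crMatch, card_filter, sum_product]
  simp [h]

theorem sum_pow_crMatch_eq_crossingPoly (m : ℕ) :
    ∑ σ ∈ univ.filter (fun σ : Equiv.Perm (Fin m) => σ * σ = 1 ∧ ∀ i, σ i ≠ i),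
      (X : ℤ[X]) ^ crMatch σ = crossingPoly m 0 := by
  rw [crossingPoly, ← sum_filter]
  have h (σ : Equiv.Perm (Fin m)) : (σ * σ = 1 ∧ ∀ i, σ i ≠ i) ↔
      (∀ i, σ (σ i) = i) ∧ #(fixedPts σ) = 0 := by
    simp [Equiv.Perm.ext_iff, fixedPts, filter_eq_empty_iff]
  refine sum_congr (filter_congr fun σ _ => h σ) fun σ hσ => ?_
  rw [partialCrossings_eq_crMatch ((h σ).2 (mem_filter.1 hσ).2).2]

end Involutions

theorem stmt18 (n : ℕ) :
    (1 - X : Polynomial ℤ) ^ n *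
      ∑ σ ∈ Finset.univ.filter
          (fun σ : Equiv.Perm (Fin (2*n)) => σ * σ = 1 ∧ ∀ i, σ i ≠ i),
        (X : Polynomial ℤ) ^ crMatch σ =
      ∑ k ∈ Finset.range (n+1),
        ((chooseInt (2*n) ((n : ℤ) - k) - chooseInt (2*n) ((n : ℤ) - k - 1) : ℤ) :
            Polynomial ℤ) *
          (-1 : Polynomial ℤ)^k * X ^ (k*(k+1)/2) := by
  rw [sum_pow_crMatch_eq_crossingPoly, crossingPoly_eq_pathSum,
    ← pathSum_mul_left (1 - X : ℤ[X]) _ (show 2 * n = 0 + 2 * n by ring)]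
  simp only [mul_neg_geom_sum]
  have h := sum_range_add (fun j => pathSum (fun _ => (1 : ℤ[X])) (2 * n) (0 + 2 * j) *
    pathCoeff X 0 j) (n + 1) n
  rw [sum_eq_zero (s := range n) fun j _ => by
    rw [pathSum_eq_zero_of_lt _ (by omega), zero_mul], add_zero] at h
  rw [pathSum_one_sub_pow (X : ℤ[X]) 0 (show 2 * n < n + 1 + n by omega), h]
  refine sum_congr rfl fun k _ => ?_
  rw [pathSum_one_eq_chooseInt (b := (n : ℤ) - k) (by push_cast; ring), pathCoeff, qBinom,
    mul_one, mul_assoc]
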